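/- With the construction of the previous statement, the image of the cluster representation can be taken inside {0, 1, ..., ⌊(1+√2)^n / 4⌋}: every cluster tree on an n-element set has a cluster representation f : X → {0, ..., ⌊(1+√2)^n / 4⌋} ⊆ ℤ with Euclidean distance. -/

import Mathlib

/-!
Process the merges in order, keeping an integer map `f ≥ 0` that realizes all merges made so far
within each block. To merge blocks `A` and `B`, translate `B` by `max_A f + d + 1`, where `d` bounds
`f`: all cross-distances then exceed `d`. If in addition `f x + f y ≤ d + d'` for `x`, `y` in
different blocks, with `d'` the bound of the previous stage, the new values are at most
`2 d + d' + 1`, and the sum condition persists because at most one of two points lying in different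
blocks has been translated. The recurrence `2 d + d' + 1` has growth rate `1 + √2`.
-/

/-- The bound on the coordinates of a representation of a cluster tree on `n` points, which also
bounds the distances within a block after `n - 1` merges. The first two values are chosen such that
the recurrence holds from the start. -/
def diamBound : ℕ → ℤ
  | 0 => 0
  | 1 => 0
  | n + 2 => 2 * diamBound (n + 1) + diamBound n + 1

theorem diamBound_nonneg : ∀ n, 0 ≤ diamBound n
  | 0 => le_rfl
  | 1 => le_rfl
  | n + 2 => by
    have := diamBound_nonneg n
    have := diamBound_nonneg (n + 1)
    rw [diamBound]
    positivity

theorem diamBound_mono : Monotone diamBound := by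
  refine monotone_nat_of_le_succ fun n => ?_
  cases n with
  | zero => exact le_rfl
  | succ n =>
    have := diamBound_nonneg n
    have := diamBound_nonneg (n + 1)
    rw [diamBound]
    lia

theorem diamBound_eq : ∀ n,
    (diamBound n : ℝ) = ((1 + √2) ^ n + (1 - √2) ^ n) / 4 - 1 / 2
  | 0 => by norm_num [diamBound]
  | 1 => by norm_num [diamBound]
  | n + 2 => by
    have h_sq : √2 ^ 2 = 2 := Real.sq_sqrt zero_le_two
    have h_add : (1 + √2) ^ 2 = 2 * (1 + √2) + 1 := by linear_combination h_sq
    have h_sub : (1 - √2) ^ 2 = 2 * (1 - √2) + 1 := by linear_combination h_sq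
    rw [diamBound, pow_add _ n 2, pow_add _ n 2, h_add, h_sub]
    push_cast
    rw [diamBound_eq n, diamBound_eq (n + 1)]
    ring

theorem diamBound_le_floor (n : ℕ) : diamBound n ≤ ⌊((1 + √2) ^ n / 4 : ℝ)⌋ := by
  have h_abs : |1 - √2| ≤ 1 := by
    rw [abs_le]
    constructor <;> linarith [Real.sqrt_nonneg 2, Real.sqrt_two_lt_three_halves]
  have h_pow : (1 - √2) ^ n ≤ 1 :=
    (le_abs_self _).trans (abs_pow (1 - √2) n ▸ pow_le_one₀ (abs_nonneg _) h_abs)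
  rw [Int.le_floor, diamBound_eq]
  linarith

section Setoid

variable {X : Type*}

/-- `s` is the equivalence relation obtained from `r` by merging the distinct classes of `a` and `b`
into one. -/
structure MergesClasses (r s : Setoid X) (a b : X) : Prop where
  not_rel : ¬ r a b
  rel_iff : ∀ x y, s x y ↔ r x y ∨ (r a x ∧ r b y) ∨ (r b x ∧ r a y)

namespace MergesClasses

variable {r s : Setoid X} {a a' b : X}

theorem le (h : MergesClasses r s a b) : r ≤ s :=
  fun x y hxy => (h.rel_iff x y).2 (.inl hxy)

theorem rel (h : MergesClasses r s a b) : s a b :=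
  (h.rel_iff a b).2 (.inr (.inl ⟨r.refl a, r.refl b⟩))

theorem congr_left (h : MergesClasses r s a b) (ha : r a a') : MergesClasses r s a' b := by
  have h_class (x : X) : r a' x ↔ r a x := ⟨r.trans ha, r.trans (r.symm ha)⟩
  exact ⟨by simpa only [h_class] using h.not_rel, by simpa only [h_class] using h.rel_iff⟩

end MergesClasses

theorem monotoneOn_of_mergesClasses {r : ℕ → Setoid X} {n : ℕ}
    (hmerge : ∀ k < n, ∃ a b, MergesClasses (r k) (r (k + 1)) a b) :
    MonotoneOn r (Set.Iic n) :=
  monotoneOn_of_le_succ Set.ordConnected_Iic fun k _ _ hk =>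
    let ⟨_, _, h⟩ := hmerge k (Nat.lt_of_succ_le hk)
    h.le

open Classical in
/-- The map `f` translated by `f a + d + 1` on the class of `b`. If `f` is nonnegative and attains
its maximum on the class of `a` at `a`, this moves the two classes more than `d` apart. -/
noncomputable def separateClasses (r : Setoid X) (f : X → ℤ) (a b : X) (d : ℤ) (x : X) : ℤ :=
  if r b x then f x + (f a + d + 1) else f x

section separateClasses

variable {r : Setoid X} {f : X → ℤ} {a b x y : X} {d : ℤ}

theorem separateClasses_of_rel (h : r b x) :
    separateClasses r f a b d x = f x + (f a + d + 1) := if_pos h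

theorem separateClasses_of_not_rel (h : ¬ r b x) : separateClasses r f a b d x = f x := if_neg h

theorem separateClasses_sub_of_rel (h : r x y) :
    separateClasses r f a b d x - separateClasses r f a b d y = f x - f y := by
  by_cases hx : r b x
  · rw [separateClasses_of_rel hx, separateClasses_of_rel (r.trans hx h), add_sub_add_right_eq_sub]
  · have hy : ¬ r b y := fun hy => hx (r.trans hy (r.symm h))
    rw [separateClasses_of_not_rel hx, separateClasses_of_not_rel hy]

theorem lt_abs_separateClasses_sub (hf : ∀ x, 0 ≤ f x) (hmax : ∀ x, r a x → f x ≤ f a)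
    (hab : ¬ r a b) (hx : r a x) (hy : r b y) :
    d < |separateClasses r f a b d x - separateClasses r f a b d y| := by
  have hbx : ¬ r b x := fun h => hab (r.trans hx (r.symm h))
  rw [separateClasses_of_not_rel hbx, separateClasses_of_rel hy, lt_abs]
  have := hf y
  have := hmax x hx
  lia

end separateClasses

/-- Within each class of `r k`, the map `f` represents the chain `r 0, …, r k` of equivalence
relations: two points are related by `r j` exactly when their distance is at most
`diamBound (j + 1)`. The bounds on the values and on the sums across classes are what makes it
possible to continue with stage `k + 1`. -/
structure RepresentsUpTo (r : ℕ → Setoid X) (k : ℕ) (f : X → ℤ) : Prop where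
  nonneg : ∀ x, 0 ≤ f x
  le_diamBound : ∀ x, f x ≤ diamBound (k + 1)
  add_le : ∀ x y, ¬ r k x y → f x + f y ≤ diamBound (k + 1) + diamBound k
  rel_iff : ∀ j ≤ k, ∀ x y, r k x y → (r j x y ↔ |f x - f y| ≤ diamBound (j + 1))

theorem representsUpTo_zero (r : ℕ → Setoid X) : RepresentsUpTo r 0 0 where
  nonneg _ := le_rfl
  le_diamBound _ := le_rfl
  add_le _ _ _ := le_rfl
  rel_iff j hj x y hxy := by
    obtain rfl := Nat.le_zero.1 hj
    simp [hxy, diamBound]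

namespace RepresentsUpTo

variable {r : ℕ → Setoid X} {k : ℕ} {f : X → ℤ} {a b x y u v : X}

theorem exists_max_of_class (hf : RepresentsUpTo r k f) (s : Setoid X) (a : X) :
    ∃ m, s a m ∧ ∀ x, s a x → f x ≤ f m := by
  obtain ⟨_, ⟨m, hm, rfl⟩, hmax⟩ := Int.exists_greatest_of_bdd
    (P := fun z => ∃ x, s a x ∧ f x = z)
    ⟨diamBound (k + 1), fun _ ⟨x, _, hx⟩ => hx ▸ hf.le_diamBound x⟩ ⟨f a, a, s.refl a, rfl⟩
  exact ⟨m, hm, fun x hx => hmax (f x) ⟨x, hx, rfl⟩⟩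

theorem separateClasses_nonneg (hf : RepresentsUpTo r k f) (x : X) :
    0 ≤ separateClasses (r k) f a b (diamBound (k + 1)) x := by
  have := hf.nonneg x
  have := hf.nonneg a
  have := diamBound_nonneg (k + 1)
  unfold separateClasses
  split_ifs <;> lia

theorem separateClasses_le (hf : RepresentsUpTo r k f) (hab : ¬ r k a b) (x : X) :
    separateClasses (r k) f a b (diamBound (k + 1)) x ≤ diamBound (k + 2) := by
  by_cases hx : r k b x
  · have := hf.add_le a x fun hax => hab ((r k).trans hax ((r k).symm hx))
    rw [separateClasses_of_rel hx, diamBound]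
    lia
  · rw [separateClasses_of_not_rel hx]
    exact (hf.le_diamBound x).trans (diamBound_mono (Nat.le_succ _))

theorem separateClasses_add_le (hf : RepresentsUpTo r k f) (hab : ¬ r k a b) (hxy : ¬ r k x y) :
    separateClasses (r k) f a b (diamBound (k + 1)) x +
        separateClasses (r k) f a b (diamBound (k + 1)) y ≤
      diamBound (k + 2) + diamBound (k + 1) := by
  wlog hy : ¬ r k b y generalizing x y
  · have hx : ¬ r k b x := fun hx => hxy ((r k).trans ((r k).symm hx) (not_not.1 hy))
    rw [add_comm]
    exact this (fun h => hxy ((r k).symm h)) hx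
  · refine add_le_add (hf.separateClasses_le hab x) ?_
    rw [separateClasses_of_not_rel hy]
    exact hf.le_diamBound y

theorem separateClasses_rel_iff (hf : RepresentsUpTo r k f) (hmono : ∀ j ≤ k, r j ≤ r k)
    (hmax : ∀ x, r k a x → f x ≤ f a) (hm : MergesClasses (r k) (r (k + 1)) a b)
    {j : ℕ} (hj : j ≤ k) (hxy : r (k + 1) x y) :
    r j x y ↔ |separateClasses (r k) f a b (diamBound (k + 1)) x -
      separateClasses (r k) f a b (diamBound (k + 1)) y| ≤ diamBound (j + 1) := by
  by_cases h : r k x y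
  · rw [separateClasses_sub_of_rel h, hf.rel_iff j hj x y h]
  · refine iff_of_false (fun hjxy => h (hmono j hj hjxy)) (not_le.2 ?_)
    refine (diamBound_mono (Nat.succ_le_succ hj)).trans_lt ?_
    rcases ((hm.rel_iff x y).1 hxy).resolve_left h with ⟨hx, hy⟩ | ⟨hx, hy⟩
    · exact lt_abs_separateClasses_sub hf.nonneg hmax hm.not_rel hx hy
    · rw [abs_sub_comm]
      exact lt_abs_separateClasses_sub hf.nonneg hmax hm.not_rel hy hx

theorem exists_succ (hf : RepresentsUpTo r k f) (hmono : ∀ j ≤ k, r j ≤ r k)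
    (hm : MergesClasses (r k) (r (k + 1)) a b) : ∃ g, RepresentsUpTo r (k + 1) g := by
  obtain ⟨m, ham, hmax⟩ := hf.exists_max_of_class (r k) a
  replace hm := hm.congr_left ham
  replace hmax (x : X) (hx : r k m x) : f x ≤ f m := hmax x ((r k).trans ham hx)
  refine ⟨separateClasses (r k) f m b (diamBound (k + 1)), hf.separateClasses_nonneg,
    hf.separateClasses_le hm.not_rel,
    fun x y hxy => hf.separateClasses_add_le hm.not_rel (fun h => hxy (hm.le h)),
    fun j hj x y hxy => ?_⟩
  rcases Nat.of_le_succ hj with hjk | rfl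
  · exact hf.separateClasses_rel_iff hmono hmax hm hjk hxy
  · exact iff_of_true hxy <| abs_sub_le_of_nonneg_of_le
      (hf.separateClasses_nonneg x) (hf.separateClasses_le hm.not_rel x)
      (hf.separateClasses_nonneg y) (hf.separateClasses_le hm.not_rel y)

theorem injective (hf : RepresentsUpTo r k f) (hbot : r 0 = ⊥) (htop : r k = ⊤) :
    Function.Injective f := fun x y hxy => by
  have h : r 0 x y := (hf.rel_iff 0 k.zero_le x y (htop ▸ trivial)).2 (by simp [hxy, diamBound])
  rwa [hbot] at h

theorem abs_sub_lt_abs_sub (hf : RepresentsUpTo r k f) (htop : r k = ⊤) {j : ℕ} (hj : j ≤ k)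
    (hxy : r j x y) (huv : ¬ r j u v) : |f x - f y| < |f u - f v| := by
  have h_iff (z w : X) := hf.rel_iff j hj z w (htop ▸ trivial)
  exact ((h_iff x y).1 hxy).trans_lt (not_le.1 (mt (h_iff u v).2 huv))

end RepresentsUpTo

theorem exists_representsUpTo {r : ℕ → Setoid X} {n : ℕ}
    (hmerge : ∀ k < n, ∃ a b, MergesClasses (r k) (r (k + 1)) a b) :
    ∃ f, RepresentsUpTo r n f := by
  induction n with
  | zero => exact ⟨0, representsUpTo_zero r⟩
  | succ n ih =>
    obtain ⟨f, hf⟩ := ih fun k hk => hmerge k (Nat.lt_succ_of_lt hk)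
    obtain ⟨a, b, hab⟩ := hmerge n n.lt_succ_self
    refine hf.exists_succ (fun j hj => ?_) hab
    exact monotoneOn_of_mergesClasses hmerge (Nat.le_succ_of_le hj) n.le_succ hj

end Setoid

section blockSetoid

variable {X : Type*}

/-- The equivalence relation of lying in the same blocks of `Q`, which makes sense for an arbitrary
family `Q`. If `Q` is a partition, its classes are the blocks. -/
def blockSetoid (Q : Finset (Finset X)) : Setoid X where
  r x y := ∀ C ∈ Q, x ∈ C ↔ y ∈ C
  iseqv :=
    { refl := fun _ _ _ => Iff.rfl
      symm := fun h C hC => (h C hC).symm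
      trans := fun h h' C hC => (h C hC).trans (h' C hC) }

variable {Q Q' : Finset (Finset X)} {A B C D : Finset X} {a b x y : X}

theorem blockSetoid_apply : blockSetoid Q x y ↔ ∀ C ∈ Q, x ∈ C ↔ y ∈ C := Iff.rfl

theorem blockSetoid_image_singleton [Fintype X] [DecidableEq X] :
    blockSetoid (Finset.univ.image fun x : X => ({x} : Finset X)) = ⊥ := by
  ext x y
  simp [blockSetoid_apply, eq_comm]

theorem blockSetoid_singleton_univ [Fintype X] : blockSetoid {(Finset.univ : Finset X)} = ⊤ := by
  ext x y
  simp [blockSetoid_apply, Setoid.top_def]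

theorem block_eq_of_mem (hQ : ∀ x, ∃! C, C ∈ Q ∧ x ∈ C) (hC : C ∈ Q) (hD : D ∈ Q)
    (hxC : x ∈ C) (hxD : x ∈ D) : C = D :=
  (hQ x).unique ⟨hC, hxC⟩ ⟨hD, hxD⟩

theorem blockSetoid_iff_mem (hQ : ∀ x, ∃! C, C ∈ Q ∧ x ∈ C) (hC : C ∈ Q) (hx : x ∈ C) :
    blockSetoid Q x y ↔ y ∈ C := by
  refine ⟨fun h => (h C hC).1 hx, fun hy D hD => ?_⟩
  exact ⟨fun hxD => block_eq_of_mem hQ hC hD hx hxD ▸ hy,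
    fun hyD => block_eq_of_mem hQ hC hD hy hyD ▸ hx⟩

theorem not_blockSetoid_of_ne (hQ : ∀ x, ∃! C, C ∈ Q ∧ x ∈ C) (hC : C ∈ Q) (hD : D ∈ Q)
    (hCD : C ≠ D) (hx : x ∈ C) (hy : y ∈ D) : ¬ blockSetoid Q x y := by
  rw [blockSetoid_iff_mem hQ hC hx]
  exact fun hyC => hCD (block_eq_of_mem hQ hC hD hyC hy)

variable [DecidableEq X]

theorem blockSetoid_merge_iff (hQ : ∀ x, ∃! C, C ∈ Q ∧ x ∈ C) (hA : A ∈ Q) (hB : B ∈ Q)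
    (hmerge : Q' = insert (A ∪ B) ((Q.erase A).erase B)) :
    blockSetoid Q' x y ↔ blockSetoid Q x y ∨ (x ∈ A ∧ y ∈ B) ∨ (x ∈ B ∧ y ∈ A) := by
  have h_iff : blockSetoid Q' x y ↔ (x ∈ A ∪ B ↔ y ∈ A ∪ B) ∧
      ∀ C, C ≠ B → C ≠ A → C ∈ Q → (x ∈ C ↔ y ∈ C) := by
    simp only [blockSetoid_apply, hmerge, Finset.forall_mem_insert, Finset.mem_erase, and_imp]
  have h_cross {u v : X} (hu : u ∈ A) (hv : v ∈ B) (C : Finset X) (hCB : C ≠ B) (hCA : C ≠ A)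
      (hC : C ∈ Q) : u ∈ C ↔ v ∈ C :=
    iff_of_false (fun h => hCA (block_eq_of_mem hQ hC hA h hu))
      (fun h => hCB (block_eq_of_mem hQ hC hB h hv))
  rw [h_iff]
  constructor
  · rintro ⟨h_union, h_rest⟩
    by_cases hx : x ∈ A ∪ B
    · rcases Finset.mem_union.1 hx with hxA | hxB <;>
        rcases Finset.mem_union.1 (h_union.1 hx) with hyA | hyB
      · exact .inl ((blockSetoid_iff_mem hQ hA hxA).2 hyA)
      · exact .inr (.inl ⟨hxA, hyB⟩)
      · exact .inr (.inr ⟨hxB, hyA⟩)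
      · exact .inl ((blockSetoid_iff_mem hQ hB hxB).2 hyB)
    · obtain ⟨C, ⟨hC, hxC⟩, -⟩ := hQ x
      have hCA : C ≠ A := fun h => hx (Finset.mem_union_left _ (h ▸ hxC))
      have hCB : C ≠ B := fun h => hx (Finset.mem_union_right _ (h ▸ hxC))
      exact .inl ((blockSetoid_iff_mem hQ hC hxC).2 ((h_rest C hCB hCA hC).1 hxC))
  · rintro (h | ⟨hx, hy⟩ | ⟨hx, hy⟩)
    · exact ⟨by simp only [Finset.mem_union, h A hA, h B hB], fun C _ _ hC => h C hC⟩
    · exact ⟨by simp [hx, hy], h_cross hx hy⟩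
    · exact ⟨by simp [hx, hy], fun C hCB hCA hC => (h_cross hy hx C hCB hCA hC).symm⟩

theorem mergesClasses_blockSetoid (hQ : ∀ x, ∃! C, C ∈ Q ∧ x ∈ C) (hA : A ∈ Q) (hB : B ∈ Q)
    (hAB : A ≠ B) (hmerge : Q' = insert (A ∪ B) ((Q.erase A).erase B)) (ha : a ∈ A)
    (hb : b ∈ B) : MergesClasses (blockSetoid Q) (blockSetoid Q') a b where
  not_rel := not_blockSetoid_of_ne hQ hA hB hAB ha hb
  rel_iff x y := by
    simp only [blockSetoid_iff_mem hQ hA ha, blockSetoid_iff_mem hQ hB hb]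
    exact blockSetoid_merge_iff hQ hA hB hmerge

theorem not_blockSetoid_of_pair_ne (hQ : ∀ x, ∃! C, C ∈ Q ∧ x ∈ C) (hA : A ∈ Q) (hB : B ∈ Q)
    (hmerge : Q' = insert (A ∪ B) ((Q.erase A).erase B)) (hC : C ∈ Q) (hD : D ∈ Q) (hCD : C ≠ D)
    (hpair : ({C, D} : Set (Finset X)) ≠ {A, B}) (hx : x ∈ C) (hy : y ∈ D) :
    ¬ blockSetoid Q' x y := by
  rw [blockSetoid_merge_iff hQ hA hB hmerge]
  rintro (hxy | ⟨hxA, hyB⟩ | ⟨hxB, hyA⟩)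
  · exact not_blockSetoid_of_ne hQ hC hD hCD hx hy hxy
  · rw [block_eq_of_mem hQ hC hA hx hxA, block_eq_of_mem hQ hD hB hy hyB] at hpair
    exact hpair rfl
  · rw [block_eq_of_mem hQ hC hB hx hxB, block_eq_of_mem hQ hD hA hy hyA] at hpair
    exact hpair (Set.pair_comm B A)

end blockSetoid

/-- Every cluster tree on an `n`-element set has a cluster representation
`f : X → {0, …, ⌊(1+√2)^n / 4⌋} ⊆ ℤ`. -/
theorem stmt_19 {X : Type*} [Fintype X] [DecidableEq X]
    (n : ℕ) (hn : n = Fintype.card X) (hn1 : 1 ≤ n)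
    (P : ℕ → Finset (Finset X))
    (hcover : ∀ k, k < n → ∀ x : X, ∃! C, C ∈ P k ∧ x ∈ C)
    (hne : ∀ k, k < n → ∀ C ∈ P k, C.Nonempty)
    (hdisc : P 0 = Finset.univ.image (fun x : X => ({x} : Finset X)))
    (hlast : P (n - 1) = {Finset.univ})
    (hmerge : ∀ k, k + 1 < n → ∃ A ∈ P k, ∃ B ∈ P k, A ≠ B ∧
      P (k + 1) = insert (A ∪ B) (((P k).erase A).erase B)) :
    ∃ f : X → ℤ, Function.Injective f ∧
      (∀ x : X, 0 ≤ f x ∧ f x ≤ ⌊((1 + Real.sqrt 2) ^ n / 4 : ℝ)⌋) ∧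
      ∀ k, k + 1 < n → ∀ A ∈ P k, ∀ B ∈ P k, A ≠ B →
        P (k + 1) = insert (A ∪ B) (((P k).erase A).erase B) →
        ∀ a ∈ A, ∀ b ∈ B,
          (∀ C ∈ P k, ∀ x ∈ C, ∀ y ∈ C, x ≠ y → |f x - f y| < |f a - f b|) ∧
          (∀ C ∈ P k, ∀ D ∈ P k, C ≠ D →
            ({C, D} : Set (Finset X)) ≠ {A, B} →
            ∀ x ∈ C, ∀ y ∈ D, |f a - f b| < |f x - f y|) := by
  obtain ⟨n, rfl⟩ := Nat.exists_eq_add_of_le' hn1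
  have hbot : blockSetoid (P 0) = ⊥ := hdisc ▸ blockSetoid_image_singleton
  have htop : blockSetoid (P n) = ⊤ := hlast ▸ blockSetoid_singleton_univ
  obtain ⟨f, hf⟩ : ∃ f, RepresentsUpTo (fun k => blockSetoid (P k)) n f := by
    refine exists_representsUpTo fun k hk => ?_
    have hk' := Nat.lt_succ_of_lt hk
    obtain ⟨A, hA, B, hB, hAB, hP⟩ := hmerge k (Nat.succ_lt_succ hk)
    obtain ⟨a, ha⟩ := hne k hk' A hA
    obtain ⟨b, hb⟩ := hne k hk' B hB
    exact ⟨a, b, mergesClasses_blockSetoid (hcover k hk') hA hB hAB hP ha hb⟩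
  refine ⟨f, hf.injective hbot htop,
    fun x => ⟨hf.nonneg x, (hf.le_diamBound x).trans (diamBound_le_floor _)⟩, ?_⟩
  intro k hk A hA B hB hAB hP a ha b hb
  have hk' := Nat.lt_of_succ_lt hk
  have hQ := hcover k hk'
  have hab := mergesClasses_blockSetoid hQ hA hB hAB hP ha hb
  constructor
  · intro C hC x hx y hy _
    exact hf.abs_sub_lt_abs_sub htop (Nat.le_of_lt_succ hk')
      ((blockSetoid_iff_mem hQ hC hx).2 hy) hab.not_rel
  · intro C hC D hD hCD hpair x hx y hy
    exact hf.abs_sub_lt_abs_sub htop (Nat.le_of_lt_succ hk) hab.rel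
      (not_blockSetoid_of_pair_ne hQ hA hB hP hC hD hCD hpair hx hy)
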